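/- For every natural number n, the complex geometric algebra G_{n+2}(ℂ) is isomorphic as a ℂ-algebra to the algebra of 2×2 matrices with entries in G_n(ℂ): G_{n+2}(ℂ) ≃ₐ[ℂ] Matrix (Fin 2) (Fin 2) G_n(ℂ) (periodicity 2 of complex geometric algebras). -/

import Mathlib

noncomputable section

/-- The quadratic form `Q_n(z) = Σ_{i<n} z_i²` on `Fin n → ℂ`. -/
def QC (n : ℕ) : QuadraticForm ℂ (Fin n → ℂ) :=
  QuadraticMap.weightedSumSquares ℂ (fun _ : Fin n => (1 : ℂ))

/-- The complex geometric algebra `G_n(ℂ)`. -/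
abbrev GC (n : ℕ) : Type := CliffordAlgebra (QC n)


/-- Homomorphism out of 2×2 matrices determined by an idempotent and an involution. -/
def matHom {A B : Type} [Ring A] [Ring B] [Algebra ℂ A] [Algebra ℂ B] (g : B →ₐ[ℂ] A)
    (p e : A) (hp : p * p = p) (he : e * e = 1) (hpe : e * p = e - p * e)
    (gp : ∀ b, p * g b = g b * p) (ge : ∀ b, e * g b = g b * e) :
    Matrix (Fin 2) (Fin 2) B →ₐ[ℂ] A :=
  AlgHom.ofLinearMap
    { toFun := fun M => g (M 0 0) * p + g (M 0 1) * (p * e) + g (M 1 0) * (e - p * e)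
        + g (M 1 1) * (1 - p)
      map_add' := by
        intro M N
        simp only [Matrix.add_apply, map_add]
        noncomm_ring
      map_smul' := by
        intro c M
        simp only [Matrix.smul_apply, map_smul, smul_mul_assoc, smul_add, RingHom.id_apply] }
    (by simp)
    (by
      intro M N
      have key : ∀ (a b u v : A), (∀ x, u * g x = g x * u) → ∀ x y,
          (g x * u) * (g y * v) = g (x * y) * (u * v) := by
        intro _ _ u v h x y
        rw [mul_assoc, ← mul_assoc u, h, map_mul]; simp only [mul_assoc]
      have key := key 0 0
      have c2 : ∀ x, (p * e) * g x = g x * (p * e) := by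
        intro x; rw [mul_assoc, ge, ← mul_assoc, gp, mul_assoc]
      have c3 : ∀ x, (e - p * e) * g x = g x * (e - p * e) := by
        intro x; rw [sub_mul, mul_sub, c2, ge]
      have c4 : ∀ x, (1 - p) * g x = g x * (1 - p) := by
        intro x; rw [sub_mul, mul_sub, gp, one_mul, mul_one]
      have hp' : ∀ x, p * (p * x) = p * x := fun x => by rw [← mul_assoc, hp]
      have he' : ∀ x, e * (e * x) = x := fun x => by rw [← mul_assoc, he, one_mul]
      have hpe' : ∀ x, e * (p * x) = e * x - p * (e * x) := fun x => by
        rw [← mul_assoc, hpe, sub_mul, mul_assoc]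
      simp only [LinearMap.coe_mk, AddHom.coe_mk, Matrix.mul_apply, Fin.sum_univ_two]
      simp only [add_mul _ _ (_ + _), mul_add (g _ * _), add_mul (_ + _), add_mul (g _ * _), 
        key _ _ gp, key _ _ c2, key _ _ c3, key _ _ c4]
      simp only [mul_sub, sub_mul, mul_assoc, hp, he, hpe, hp', he', hpe', mul_one, one_mul,
        map_add, add_mul]
      simp only [sub_self, mul_zero, sub_zero, add_zero, zero_add]
      noncomm_ring)

lemma QC_apply (n : ℕ) (v : Fin n → ℂ) : QC n v = ∑ i, v i * v i := by
  simp [QC, QuadraticMap.weightedSumSquares_apply]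

/-- Embedding of coordinates. -/
def J (n : ℕ) : (Fin n → ℂ) →ₗ[ℂ] (Fin (n + 2) → ℂ) where
  toFun x := Matrix.vecCons 0 (Matrix.vecCons 0 x)
  map_add' x y := by simp
  map_smul' c x := by simp

/-- Projection of coordinates. -/
def P (n : ℕ) : (Fin (n + 2) → ℂ) →ₗ[ℂ] (Fin n → ℂ) where
  toFun x := fun i => x i.succ.succ
  map_add' x y := rfl
  map_smul' c x := rfl

def f1 (n : ℕ) : Fin (n + 2) → ℂ := Matrix.vecCons 1 (Matrix.vecCons 0 0)
def f2 (n : ℕ) : Fin (n + 2) → ℂ := Matrix.vecCons 0 (Matrix.vecCons 1 0)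

lemma decomp (n : ℕ) (v : Fin (n + 2) → ℂ) : J n (P n v) + v 0 • f1 n + v 1 • f2 n = v := by
  ext i
  refine Fin.cases ?_ (fun i => Fin.cases ?_ (fun i => ?_) i) i <;> simp [J, P, f1, f2]

abbrev e1 (n : ℕ) : GC (n + 2) := CliffordAlgebra.ι (QC (n + 2)) (f1 n)
abbrev e2 (n : ℕ) : GC (n + 2) := CliffordAlgebra.ι (QC (n + 2)) (f2 n)
abbrev j (n : ℕ) (x : Fin n → ℂ) : GC (n + 2) := CliffordAlgebra.ι (QC (n + 2)) (J n x)

lemma e1e1 (n : ℕ) : e1 n * e1 n = 1 := by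
  rw [e1, CliffordAlgebra.ι_sq_scalar, QC_apply]
  simp [Fin.sum_univ_succ, f1]

lemma e2e2 (n : ℕ) : e2 n * e2 n = 1 := by
  rw [e2, CliffordAlgebra.ι_sq_scalar, QC_apply]
  simp [Fin.sum_univ_succ, f2]

lemma jj (n : ℕ) (x) : j n x * j n x = algebraMap ℂ _ (QC n x) := by
  rw [j, CliffordAlgebra.ι_sq_scalar, QC_apply, QC_apply]
  simp [Fin.sum_univ_succ, J]

lemma anti (n : ℕ) (v w : Fin n → ℂ) (h : ∀ i, v i * w i = 0) :
    CliffordAlgebra.ι (QC n) w * CliffordAlgebra.ι (QC n) v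
      = -(CliffordAlgebra.ι (QC n) v * CliffordAlgebra.ι (QC n) w) := by
  rw [eq_neg_iff_add_eq_zero, CliffordAlgebra.ι_mul_ι_add_swap, QuadraticMap.polar]
  simp only [QC_apply, ← Finset.sum_sub_distrib]
  rw [Finset.sum_eq_zero, map_zero]
  intro i _
  simp only [Pi.add_apply]
  linear_combination 2 * h i

lemma e2e1 (n : ℕ) : e2 n * e1 n = -(e1 n * e2 n) := by
  apply anti
  intro i
  refine Fin.cases ?_ (fun i => Fin.cases ?_ (fun i => ?_) i) i <;> simp [f1, f2]

lemma e1j (n : ℕ) (x) : e1 n * j n x = -(j n x * e1 n) := by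
  apply anti
  intro i
  refine Fin.cases ?_ (fun i => Fin.cases ?_ (fun i => ?_) i) i <;> simp [f1, J]

lemma e2j (n : ℕ) (x) : e2 n * j n x = -(j n x * e2 n) := by
  apply anti
  intro i
  refine Fin.cases ?_ (fun i => Fin.cases ?_ (fun i => ?_) i) i <;> simp [f2, J]

def s (n : ℕ) : GC (n + 2) := (-Complex.I) • (e1 n * e2 n)

lemma s_e1 (n : ℕ) : s n * e1 n = Complex.I • e2 n := by
  rw [s, smul_mul_assoc, mul_assoc, e2e1, mul_neg, ← mul_assoc, e1e1, one_mul]; simp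

lemma e1_s (n : ℕ) : e1 n * s n = -(s n * e1 n) := by
  rw [s_e1, s, mul_smul_comm, ← mul_assoc, e1e1, one_mul, neg_smul]

lemma e2_s (n : ℕ) : e2 n * s n = Complex.I • e1 n := by
  rw [s, mul_smul_comm, ← mul_assoc, e2e1, neg_mul, mul_assoc, e2e2, mul_one]; simp

lemma ss (n : ℕ) : s n * s n = 1 := by
  have h : s n * s n = ((-Complex.I) • (e1 n * e2 n)) * s n := rfl
  rw [h, smul_mul_assoc, mul_assoc, e2_s, mul_smul_comm, e1e1, smul_smul]; simp

lemma s_j (n : ℕ) (x) : s n * j n x = j n x * s n := by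
  rw [s, smul_mul_assoc, mul_assoc, e2j, mul_neg, ← mul_assoc, e1j, mul_smul_comm]
  simp [mul_assoc]

def g (n : ℕ) : GC n →ₐ[ℂ] GC (n + 2) :=
  CliffordAlgebra.lift (QC n)
    ⟨(LinearMap.mulRight ℂ (s n)).comp ((CliffordAlgebra.ι (QC (n + 2))).comp (J n)), by
      intro x
      change (j n x * s n) * (j n x * s n) = _
      rw [mul_assoc, ← mul_assoc (s n), s_j, mul_assoc, ss, mul_one, jj]⟩

lemma g_ι (n : ℕ) (x) : g n (CliffordAlgebra.ι (QC n) x) = j n x * s n := by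
  simp [g, j]

lemma g_comm (n : ℕ) (c : GC (n + 2)) (h : ∀ x, c * (j n x * s n) = (j n x * s n) * c) (b) :
    c * g n b = g n b * c := by
  induction b using CliffordAlgebra.induction with
  | algebraMap r => rw [AlgHom.commutes]; exact (Algebra.commutes r c).symm
  | ι x => rw [g_ι]; exact h x
  | mul a b ha hb => rw [map_mul, ← mul_assoc, ha, mul_assoc, hb, mul_assoc]
  | add a b ha hb => rw [map_add, mul_add, add_mul, ha, hb]

lemma g_s (n : ℕ) (b) : s n * g n b = g n b * s n := by
  apply g_comm
  intro x
  rw [← mul_assoc, s_j]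

lemma g_e1 (n : ℕ) (b) : e1 n * g n b = g n b * e1 n := by
  apply g_comm
  intro x
  rw [← mul_assoc, e1j, neg_mul, mul_assoc, e1_s, mul_neg, neg_neg, mul_assoc]

def p (n : ℕ) : GC (n + 2) := (1 / 2 : ℂ) • (1 + s n)

def psi (n : ℕ) : Matrix (Fin 2) (Fin 2) (GC n) →ₐ[ℂ] GC (n + 2) :=
  matHom (g n) (p n) (e1 n)
    (by
      simp only [p, smul_mul_assoc, mul_smul_comm, add_mul, mul_add, ss, one_mul, mul_one]
      module)
    (e1e1 n)
    (by
      simp only [p, smul_mul_assoc, mul_smul_comm, add_mul, mul_add, e1_s, one_mul, mul_one]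
      module)
    (by
      intro b
      simp only [p, smul_mul_assoc, mul_smul_comm, add_mul, mul_add, g_s, one_mul, mul_one])
    (g_e1 n)

lemma psi_apply (n : ℕ) (M) : psi n M = g n (M 0 0) * p n + g n (M 0 1) * (p n * e1 n)
    + g n (M 1 0) * (e1 n - p n * e1 n) + g n (M 1 1) * (1 - p n) := rfl

lemma mul_left_comm_algebraMap (n : ℕ) (a b c : ℂ) :
    algebraMap ℂ (GC n) a * (algebraMap ℂ (GC n) b * algebraMap ℂ (GC n) c)
    = algebraMap ℂ (GC n) b * (algebraMap ℂ (GC n) a * algebraMap ℂ (GC n) c) := by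
  simp only [← map_mul, mul_left_comm]

def L (n : ℕ) : (Fin (n + 2) → ℂ) →ₗ[ℂ] Matrix (Fin 2) (Fin 2) (GC n) where
  toFun v := !![CliffordAlgebra.ι (QC n) (P n v), algebraMap ℂ _ (v 0 - Complex.I * v 1);
    algebraMap ℂ _ (v 0 + Complex.I * v 1), - CliffordAlgebra.ι (QC n) (P n v)]
  map_add' v w := by
    ext i k
    fin_cases i <;> fin_cases k <;> simp [mul_add] <;> abel
  map_smul' c v := by
    ext i k
    fin_cases i <;> fin_cases k <;> simp [Algebra.smul_def (A := GC n), mul_add, mul_sub] <;>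
      exact mul_left_comm_algebraMap n _ _ _

def phi (n : ℕ) : GC (n + 2) →ₐ[ℂ] Matrix (Fin 2) (Fin 2) (GC n) :=
  CliffordAlgebra.lift (QC (n + 2)) ⟨L n, by
    intro v
    have hQ : QC (n + 2) v = QC n (P n v) + v 0 * v 0 + v 1 * v 1 := by
      simp only [QC_apply, Fin.sum_univ_succ, P]
      simp; ring
    have h1 : (v 0 - Complex.I * v 1) * (v 0 + Complex.I * v 1) = v 0 * v 0 + v 1 * v 1 := by
      linear_combination (- v 1 * v 1) * Complex.I_mul_I
    have h2 : (v 0 + Complex.I * v 1) * (v 0 - Complex.I * v 1) = v 0 * v 0 + v 1 * v 1 := by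
      linear_combination (- v 1 * v 1) * Complex.I_mul_I
    have hc := fun (r : ℂ) (x : GC n) => Algebra.commutes r x
    rw [hQ]
    ext i k
    fin_cases i <;> fin_cases k <;>
      simp only [L, LinearMap.coe_mk, AddHom.coe_mk, Matrix.mul_apply, Fin.sum_univ_two,
        Matrix.algebraMap_matrix_apply, Matrix.of_apply, Matrix.cons_val', Matrix.cons_val_zero,
        Matrix.cons_val_one, Matrix.cons_val_fin_one, Fin.zero_eta, Fin.mk_one, neg_mul_neg,
        CliffordAlgebra.ι_sq_scalar, ← map_mul, h1, h2, mul_neg, neg_mul, ← hc _ (CliffordAlgebra.ι (QC n) _), ← map_add] <;>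
      simp <;> abel⟩

lemma phi_ι (n : ℕ) (v) : phi n (CliffordAlgebra.ι (QC (n + 2)) v) = L n v := by
  simp [phi]

lemma psi_phi (n : ℕ) : (psi n).comp (phi n) = AlgHom.id ℂ _ := by
  apply CliffordAlgebra.hom_ext
  refine LinearMap.ext fun v => ?_
  change psi n (phi n (CliffordAlgebra.ι (QC (n + 2)) v)) = CliffordAlgebra.ι (QC (n + 2)) v
  rw [phi_ι, psi_apply]
  conv_rhs => rw [← decomp n v, map_add, map_add, map_smul, map_smul]
  have hL : (L n v) 0 0 = CliffordAlgebra.ι (QC n) (P n v) ∧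
    (L n v) 0 1 = algebraMap ℂ _ (v 0 - Complex.I * v 1) ∧
    (L n v) 1 0 = algebraMap ℂ _ (v 0 + Complex.I * v 1) ∧ 
    (L n v) 1 1 = - CliffordAlgebra.ι (QC n) (P n v) := ⟨rfl, rfl, rfl, rfl⟩
  rw [hL.1, hL.2.1, hL.2.2.1, hL.2.2.2, map_neg, g_ι, AlgHom.commutes, AlgHom.commutes,
    ← Algebra.smul_def, ← Algebra.smul_def]
  have h3 : j n (P n v) * s n * p n + -(j n (P n v) * s n) * (1 - p n) = j n (P n v) := by
    simp only [p, mul_sub, mul_add, mul_smul_comm, neg_mul, mul_assoc, ss, mul_one]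
    module
  have h4 : p n * e1 n = (1 / 2 : ℂ) • e1 n + (Complex.I / 2) • e2 n := by
    simp only [p, smul_mul_assoc, add_mul, s_e1, one_mul]
    module
  rw [h4]
  have h5 : (v 0 - Complex.I * v 1) • ((1 / 2 : ℂ) • e1 n + (Complex.I / 2) • e2 n)
    + (v 0 + Complex.I * v 1) • (e1 n - ((1 / 2 : ℂ) • e1 n + (Complex.I / 2) • e2 n))
    = v 0 • e1 n + v 1 • e2 n := by
    match_scalars
    · ring
    · linear_combination (- v 1) * Complex.I_mul_I
  rw [add_assoc (j n (P n v)), ← h5]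
  conv_rhs => rw [← h3]
  abel

lemma L_f1 (n : ℕ) : L n (f1 n) = !![0, 1; 1, 0] := by
  have : P n (f1 n) = 0 := by ext i; simp [P, f1]
  simp only [L, LinearMap.coe_mk, AddHom.coe_mk, this]
  simp [f1]

lemma L_f2 (n : ℕ) : L n (f2 n) =
    !![0, -algebraMap ℂ _ Complex.I; algebraMap ℂ _ Complex.I, 0] := by
  have : P n (f2 n) = 0 := by ext i; simp [P, f2]
  simp only [L, LinearMap.coe_mk, AddHom.coe_mk, this]
  simp [f2]

lemma L_J (n : ℕ) (x) : L n (J n x) =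
    !![CliffordAlgebra.ι (QC n) x, 0; 0, -CliffordAlgebra.ι (QC n) x] := by
  have : P n (J n x) = x := by ext i; simp [P, J]
  simp only [L, LinearMap.coe_mk, AddHom.coe_mk, this]
  simp [J]

lemma phi_s (n : ℕ) : phi n (s n) = !![1, 0; 0, -1] := by
  have h : algebraMap ℂ (GC n) Complex.I * algebraMap ℂ (GC n) Complex.I = -1 := by
    rw [← map_mul, Complex.I_mul_I]; simp
  rw [s, map_smul, map_mul, phi_ι, phi_ι, L_f1, L_f2]
  ext i k
  fin_cases i <;> fin_cases k <;> simp [Algebra.smul_def, h]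

lemma phi_g (n : ℕ) (b : GC n) : phi n (g n b) = Matrix.scalar (Fin 2) b := by
  induction b using CliffordAlgebra.induction with
  | algebraMap r =>
    rw [AlgHom.commutes, AlgHom.commutes]; rfl
  | ι x =>
    rw [g_ι, map_mul, phi_ι, phi_s, L_J]
    ext i k
    fin_cases i <;> fin_cases k <;> simp [Matrix.mul_apply]
  | mul a b ha hb => rw [map_mul, map_mul, ha, hb, map_mul]
  | add a b ha hb => rw [map_add, map_add, ha, hb, map_add]

lemma phi_psi (n : ℕ) : (phi n).comp (psi n) = AlgHom.id ℂ _ := by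
  ext1 M
  change phi n (psi n M) = M
  have h1 : phi n (p n) = !![1, 0; 0, 0] := by
    rw [p, map_smul, map_add, map_one, phi_s]
    ext i k
    fin_cases i <;> fin_cases k <;> simp [Algebra.smul_def]
    rw [one_add_one_eq_two, ← map_ofNat (algebraMap ℂ (GC n)) 2, ← map_mul]; simp
  have h2 : phi n (e1 n) = !![0, 1; 1, 0] := by
    rw [phi_ι, L_f1]
  rw [psi_apply]
  simp only [map_add, map_mul, map_sub, map_one, phi_g, h1, h2]
  ext i k
  fin_cases i <;> fin_cases k <;> simp [Matrix.mul_apply, Matrix.scalar_apply, Matrix.one_apply]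

theorem GC_n2_iso_matrix2 (n : ℕ) :
    Nonempty (GC (n + 2) ≃ₐ[ℂ] Matrix (Fin 2) (Fin 2) (GC n)) := by
  exact ⟨AlgEquiv.ofAlgHom (phi n) (psi n) (phi_psi n) (psi_phi n)⟩
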